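/- arXiv:2604.27793 — 4 statements merged into one kernel-verified Lean document; each statement's English description precedes it below -/
import Mathlib

section
/- Let m ≥ 0 be an integer and let α₁,…,α_m ≥ 0 be real numbers. Then for every complex number α with Re α > α₁+⋯+α_m, the integral ∫_ℝ | cosh(x)^{−α} · ∏_{j=1}^m F_{α_j}(ix) | dx is finite (i.e. the integral defining a(α; α₁,…,α_m) converges absolutely), and the function α ↦ a(α; α₁,…,α_m) is holomorphic (complex differentiable) on the half-plane { α ∈ ℂ : Re α > α₁+⋯+α_m }. -/
/-!
Everything is compared with powers of `cosh x ≥ 1`. For each `δ > 0`, both `1 + |x|` and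
`log (cosh x)` are `O(cosh x ^ δ)`, because `exp |x| ≤ 2 cosh x`; since `cosh` increases with `|y|`,
the primitive of `cosh ^ β` is at most `|x| cosh x ^ β`, hence `F_β(ix) = O(cosh x ^ (β + δ))`
(`exists_norm_Fim_le`). So for each `ε > 0` the product of the `F_{α_j}` is
`O(cosh x ^ (∑ α_j + ε))` (`exists_norm_prod_Fim_le`). Negative powers of `cosh` are integrable,
being `O(1 / (1 + x ^ 2))`, which gives absolute convergence. Differentiating in `α` only costs a
factor `log (cosh x)`, so on a small disc around a point of the half-plane the derivative of the
integrand is dominated by a fixed negative power of `cosh`, and one may differentiate under the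
integral sign.
-/

open MeasureTheory Finset

noncomputable section

/-- The constant `c_β = Γ(β+3/2)/(√π · Γ(β+1))`. -/
def cconst (β : ℝ) : ℝ := Real.Gamma (β + 3 / 2) / (Real.sqrt Real.pi * Real.Gamma (β + 1))

/-- The value `F_β(ix) = 1/(2 c_{(β-1)/2}) + i ∫₀ˣ cosh^β(y) dy` for real `x`. -/
def Fim (β : ℝ) (x : ℝ) : ℂ :=
  ((1 / (2 * cconst ((β - 1) / 2)) : ℝ) : ℂ) +
    Complex.I * ((∫ y in (0 : ℝ)..x, Real.cosh y ^ β : ℝ) : ℂ)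

/-- The function `a(α; α₁,…,α_m) = ∫_ℝ cosh(x)^{-α} ∏_j F_{α_j}(ix) dx`. -/
def aFun (m : ℕ) (αs : Fin m → ℝ) (α : ℂ) : ℂ :=
  ∫ x : ℝ, (Real.cosh x : ℂ) ^ (-α) * ∏ j, Fim (αs j) x

lemma one_add_abs_le_cosh_rpow {δ : ℝ} (hδ : 0 < δ) (x : ℝ) :
    1 + |x| ≤ (2 + 1 / δ) * Real.cosh x ^ δ := by
  have h1 := Real.one_le_cosh x
  have h2 : Real.exp |x| ≤ 2 * Real.cosh x := by
    rw [← Real.cosh_abs x, Real.cosh_eq]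
    have := Real.exp_pos (-|x|)
    linarith
  have h3 : |x| ≤ Real.log 2 + Real.log (Real.cosh x) := by
    rw [← Real.log_mul (by norm_num) (by positivity)]
    exact (Real.le_log_iff_exp_le (by positivity)).2 h2
  have h4 := Real.log_le_rpow_div (x := Real.cosh x) (by positivity) hδ
  have h5 : Real.log 2 ≤ 1 := by linarith [Real.log_two_lt_d9]
  have h6 := Real.one_le_rpow h1 hδ.le
  calc 1 + |x| ≤ 2 + Real.cosh x ^ δ / δ := by linarith
    _ ≤ 2 * Real.cosh x ^ δ + Real.cosh x ^ δ / δ := by linarith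
    _ = _ := by ring

lemma continuous_cosh_rpow (β : ℝ) : Continuous fun y : ℝ => Real.cosh y ^ β :=
  Real.continuous_cosh.rpow_const fun y => Or.inl (Real.cosh_pos y).ne'

lemma integrable_cosh_rpow_neg {c : ℝ} (hc : 0 < c) :
    Integrable fun x : ℝ => Real.cosh x ^ (-c) := by
  refine (integrable_inv_one_add_sq.const_mul ((2 + 1 / (c / 2)) ^ 2)).mono'
    (continuous_cosh_rpow _).aestronglyMeasurable (ae_of_all _ fun x => ?_)
  have h0 := Real.cosh_pos x
  have h := one_add_abs_le_cosh_rpow (half_pos hc) x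
  have hsq : Real.cosh x ^ c = (Real.cosh x ^ (c / 2)) ^ 2 := by
    rw [← Real.rpow_natCast, ← Real.rpow_mul h0.le]
    congr 1
    push_cast
    ring
  rw [Real.norm_of_nonneg (by positivity), Real.rpow_neg h0.le, ← div_eq_mul_inv,
    inv_eq_one_div, div_le_div_iff₀ (by positivity) (by positivity), hsq, ← mul_pow, one_mul]
  refine le_trans ?_ (pow_le_pow_left₀ (by positivity) h 2)
  nlinarith [abs_nonneg x, sq_abs x]

lemma continuous_Fim (β : ℝ) : Continuous (Fim β) := by
  unfold Fim
  have := intervalIntegral.continuous_primitive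
    (fun a b => (continuous_cosh_rpow β).intervalIntegrable (μ := volume) a b) 0
  fun_prop

lemma abs_integral_cosh_rpow_le {β : ℝ} (hβ : 0 ≤ β) (x : ℝ) :
    |∫ y in (0 : ℝ)..x, Real.cosh y ^ β| ≤ Real.cosh x ^ β * |x| := by
  have := intervalIntegral.norm_integral_le_of_norm_le_const (a := 0) (b := x)
    (f := fun y => Real.cosh y ^ β) (C := Real.cosh x ^ β) fun y hy => by
      have h0 := Real.cosh_pos y
      rw [Real.norm_of_nonneg (by positivity)]
      refine Real.rpow_le_rpow h0.le (Real.cosh_le_cosh.2 ?_) hβ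
      rcases Set.mem_uIoc.1 hy with h | h
      · rw [abs_of_pos h.1, abs_of_pos (h.1.trans_le h.2)]
        exact h.2
      · rw [abs_of_nonpos h.2, abs_of_nonpos (h.1.le.trans h.2)]
        linarith [h.1]
  simpa using this

/-- The loss `δ` in the exponent absorbs the factor `1 + |x|` coming from the length of the interval
of integration. For `β > 0` it is not optimal, but it allows `β = 0` without a case distinction. -/
lemma exists_norm_Fim_le {β : ℝ} (hβ : 0 ≤ β) {δ : ℝ} (hδ : 0 < δ) :
    ∃ C : ℝ, 0 ≤ C ∧ ∀ x, ‖Fim β x‖ ≤ C * Real.cosh x ^ (β + δ) := by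
  set c : ℝ := 1 / (2 * cconst ((β - 1) / 2)) with hc
  refine ⟨(|c| + 1) * (2 + 1 / δ), by positivity, fun x => ?_⟩
  have h0 := Real.cosh_pos x
  have hA := Real.one_le_rpow (Real.one_le_cosh x) hβ
  have hI := abs_integral_cosh_rpow_le hβ x
  have hx := one_add_abs_le_cosh_rpow hδ x
  have hF : ‖Fim β x‖ ≤ |c| + |∫ y in (0 : ℝ)..x, Real.cosh y ^ β| := by
    unfold Fim
    refine (norm_add_le _ _).trans ?_
    rw [norm_mul, Complex.norm_I, one_mul, Complex.norm_real, Complex.norm_real,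
      Real.norm_eq_abs, Real.norm_eq_abs]
  calc ‖Fim β x‖ ≤ |c| + Real.cosh x ^ β * |x| := hF.trans (by linarith)
    _ ≤ (|c| + 1) * (Real.cosh x ^ β * (1 + |x|)) := by
        nlinarith [abs_nonneg c, abs_nonneg x, mul_nonneg (abs_nonneg c) (sub_nonneg.2 hA),
          mul_nonneg (abs_nonneg c) (mul_nonneg (zero_le_one.trans hA) (abs_nonneg x))]
    _ ≤ (|c| + 1) * (Real.cosh x ^ β * ((2 + 1 / δ) * Real.cosh x ^ δ)) := by gcongr
    _ = _ := by
        rw [Real.rpow_add h0]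
        ring

/-- Induction on `s`, halving the loss `ε` in the exponent at each factor. -/
lemma exists_norm_prod_Fim_le {m : ℕ} (αs : Fin m → ℝ) (hαs : ∀ j, 0 ≤ αs j)
    (s : Finset (Fin m)) {ε : ℝ} (hε : 0 < ε) :
    ∃ C : ℝ, 0 ≤ C ∧ ∀ x, ‖∏ j ∈ s, Fim (αs j) x‖ ≤ C * Real.cosh x ^ (∑ j ∈ s, αs j + ε) := by
  classical
  induction s using Finset.induction_on generalizing ε with
  | empty =>
    exact ⟨1, zero_le_one, fun x => by
      simpa using Real.one_le_rpow (Real.one_le_cosh x) hε.le⟩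
  | insert a s ha ih =>
    obtain ⟨C, hC, h⟩ := ih (half_pos hε)
    obtain ⟨D, hD, h'⟩ := exists_norm_Fim_le (hαs a) (half_pos hε)
    refine ⟨D * C, by positivity, fun x => ?_⟩
    have h0 := Real.cosh_pos x
    rw [Finset.prod_insert ha, Finset.sum_insert ha, norm_mul]
    calc _ ≤ (D * Real.cosh x ^ (αs a + ε / 2)) *
          (C * Real.cosh x ^ (∑ j ∈ s, αs j + ε / 2)) := by
          gcongr
          · exact h' x
          · exact h x
      _ = D * C * (Real.cosh x ^ (αs a + ε / 2) * Real.cosh x ^ (∑ j ∈ s, αs j + ε / 2)) := by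
          ring
      _ = _ := by
          rw [← Real.rpow_add h0]
          congr 2
          ring

lemma norm_cosh_cpow_neg (x : ℝ) (α : ℂ) :
    ‖(Real.cosh x : ℂ) ^ (-α)‖ = Real.cosh x ^ (-α.re) := by
  rw [Complex.norm_cpow_eq_rpow_re_of_pos (Real.cosh_pos x), Complex.neg_re]

lemma continuous_integrand {m : ℕ} (αs : Fin m → ℝ) (α : ℂ) :
    Continuous fun x : ℝ => (Real.cosh x : ℂ) ^ (-α) * ∏ j, Fim (αs j) x := by
  refine Continuous.mul ?_ (continuous_finsetProd _ fun j _ => continuous_Fim _)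
  refine (Complex.continuous_ofReal.comp Real.continuous_cosh).cpow continuous_const fun x => ?_
  exact Or.inl (by simpa using Real.cosh_pos x)

lemma integrable_integrand {m : ℕ} (αs : Fin m → ℝ) (hαs : ∀ j, 0 ≤ αs j) {α : ℂ}
    (hα : (∑ j, αs j) < α.re) :
    Integrable (fun x : ℝ => (Real.cosh x : ℂ) ^ (-α) * ∏ j, Fim (αs j) x) := by
  have hr : 0 < (α.re - ∑ j, αs j) / 2 := by linarith
  obtain ⟨C, hC, h⟩ := exists_norm_prod_Fim_le αs hαs Finset.univ hr
  refine ((integrable_cosh_rpow_neg hr).const_mul C).mono'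
    (continuous_integrand αs α).aestronglyMeasurable (ae_of_all _ fun x => ?_)
  have h0 := Real.cosh_pos x
  rw [norm_mul, norm_cosh_cpow_neg]
  calc _ ≤ Real.cosh x ^ (-α.re) * (C * Real.cosh x ^ (∑ j, αs j + (α.re - ∑ j, αs j) / 2)) := by
        gcongr
        exact h x
    _ = C * (Real.cosh x ^ (-α.re) * Real.cosh x ^ (∑ j, αs j + (α.re - ∑ j, αs j) / 2)) := by
        ring
    _ = _ := by
        rw [← Real.rpow_add h0]
        congr 2
        ring

/-- the integral defining `a` converges absolutely for
`Re α > α₁ + ⋯ + α_m`, and `a` is holomorphic on this half-plane. -/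
theorem aFun_integrable_and_differentiableOn
    (m : ℕ) (αs : Fin m → ℝ) (hαs : ∀ j, 0 ≤ αs j) :
    (∀ α : ℂ, (∑ j, αs j) < α.re →
      Integrable (fun x : ℝ => (Real.cosh x : ℂ) ^ (-α) * ∏ j, Fim (αs j) x)) ∧
    DifferentiableOn ℂ (aFun m αs) {α : ℂ | (∑ j, αs j) < α.re} := by
  refine ⟨fun α hα => integrable_integrand αs hαs hα, fun α₀ hα₀ => ?_⟩
  replace hα₀ : (∑ j, αs j) < α₀.re := hα₀
  -- A quarter of the distance to the boundary line is spent on each of: the radius of the disc,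
  -- the product of the `F_{α_j}`, the logarithm, and integrability.
  obtain ⟨r, hr, hre⟩ : ∃ r : ℝ, 0 < r ∧ α₀.re = ∑ j, αs j + 4 * r :=
    ⟨(α₀.re - ∑ j, αs j) / 4, by linarith, by ring⟩
  obtain ⟨C, hC, h⟩ := exists_norm_prod_Fim_le αs hαs Finset.univ hr
  have hlog : Continuous fun x : ℝ => -(Real.log (Real.cosh x) : ℂ) :=
    (Complex.continuous_ofReal.comp
      (Real.continuous_cosh.log fun x => (Real.cosh_pos x).ne')).neg
  have key := hasDerivAt_integral_of_dominated_loc_of_deriv_le (μ := (volume : Measure ℝ))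
    (F := fun (α : ℂ) (x : ℝ) => (Real.cosh x : ℂ) ^ (-α) * ∏ j, Fim (αs j) x)
    (F' := fun (α : ℂ) (x : ℝ) => -(Real.log (Real.cosh x) : ℂ) *
      ((Real.cosh x : ℂ) ^ (-α) * ∏ j, Fim (αs j) x))
    (bound := fun x => C / r * Real.cosh x ^ (-r))
    (Metric.ball_mem_nhds α₀ hr)
    (Filter.Eventually.of_forall fun α => (continuous_integrand αs α).aestronglyMeasurable)
    (integrable_integrand αs hαs hα₀)
    (hlog.mul (continuous_integrand αs α₀)).aestronglyMeasurable
    (ae_of_all _ fun x α hα => ?_)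
    ((integrable_cosh_rpow_neg hr).const_mul _)
    (ae_of_all _ fun x α hα => ?_)
  · exact key.2.differentiableAt.differentiableWithinAt
  · have h0 := Real.cosh_pos x
    have h1 := Real.one_le_cosh x
    have hαre : ∑ j, αs j + 3 * r ≤ α.re := by
      have := (Complex.abs_re_le_norm (α - α₀)).trans_lt (mem_ball_iff_norm.1 hα)
      rw [Complex.sub_re] at this
      linarith [(abs_lt.1 this).1]
    rw [norm_mul, norm_mul, norm_cosh_cpow_neg, norm_neg, Complex.norm_real,
      Real.norm_of_nonneg (Real.log_nonneg h1)]
    calc _ ≤ Real.cosh x ^ r / r * (Real.cosh x ^ (-(∑ j, αs j + 3 * r)) *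
          (C * Real.cosh x ^ (∑ j, αs j + r))) := by
          gcongr
          · exact Real.log_le_rpow_div h0.le hr
          · exact h x
      _ = C / r * (Real.cosh x ^ r * Real.cosh x ^ (-(∑ j, αs j + 3 * r)) *
          Real.cosh x ^ (∑ j, αs j + r)) := by ring
      _ = _ := by
          rw [← Real.rpow_add h0, ← Real.rpow_add h0]
          congr 2
          ring
  · have h0 : (Real.cosh x : ℂ) ≠ 0 := by exact_mod_cast (Real.cosh_pos x).ne'
    have hd := ((hasDerivAt_id α).neg.const_cpow (c := (Real.cosh x : ℂ)) (Or.inl h0)).mul_const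
      (∏ j, Fim (αs j) x)
    refine hd.congr_deriv ?_
    rw [Complex.ofReal_log (Real.cosh_pos x).le]
    simp only [Pi.neg_apply, id]
    ring

end
end

section
/- Let m ≥ 0 be an integer and let α₁,…,α_m ≥ 0 be real numbers. Then for every complex number α with Re α > −1, the integral ∫_{−π/2}^{π/2} | cos(x)^{α} · ∏_{j=1}^m F_{α_j}(x) | dx is finite (i.e. the integral defining b(α; α₁,…,α_m) converges absolutely), and the function α ↦ b(α; α₁,…,α_m) is holomorphic (complex differentiable) on the half-plane { α ∈ ℂ : Re α > −1 }. -/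
/-!
Near the endpoints `±π/2` the cosine is bounded below by a positive multiple of the distance to the
endpoint, so `cos ^ r` is integrable over `[-π/2, π/2]` for every real `r > -1`
(`intervalIntegrable_cos_rpow`). Each `Freal β` with `β ≥ 0` is a primitive of a continuous function,
so the product of these functions is continuous, hence harmless (`continuous_prod_Freal`).
Since `‖(cos x) ^ α‖ = (cos x) ^ (re α)`, absolute convergence follows.

For holomorphy at `α₀`, put `ε = (re α₀ + 1) / 3` and differentiate under the integral sign on the
ball of radius `ε` around `α₀`. There the derivative `(cos x) ^ α * log (cos x)` has norm at most
`(cos x) ^ (re α₀ - 2 ε) / ε`, because `|log c| * c ^ ε ≤ 1 / ε` for `0 < c ≤ 1`, and the exponent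
`re α₀ - 2 ε` is still larger than `-1`.
-/

open MeasureTheory Finset

noncomputable section

/-- `F_β(x) = ∫_{-π/2}^x cos^β(y) dy` for `x ∈ [-π/2, π/2]`. -/
def Freal (β : ℝ) (x : ℝ) : ℝ := ∫ y in (-(Real.pi / 2))..x, Real.cos y ^ β

/-- The function `b(α; α₁,…,α_m) = ∫_{-π/2}^{π/2} cos(x)^α ∏_j F_{α_j}(x) dx`. -/
def bFun (m : ℕ) (αs : Fin m → ℝ) (α : ℂ) : ℂ :=
  ∫ x in (-(Real.pi / 2))..(Real.pi / 2),
    (Real.cos x : ℂ) ^ α * ∏ j, ((Freal (αs j) x : ℝ) : ℂ)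

lemma continuous_Freal {β : ℝ} (hβ : 0 ≤ β) : Continuous (Freal β) := by
  have h : Continuous fun y : ℝ => Real.cos y ^ β :=
    Real.continuous_cos.rpow_const fun _ => Or.inr hβ
  exact intervalIntegral.continuous_primitive (fun a b => h.intervalIntegrable a b) _

lemma continuous_prod_Freal {m : ℕ} {αs : Fin m → ℝ} (hαs : ∀ j, 0 ≤ αs j) :
    Continuous fun x : ℝ => ∏ j, ((Freal (αs j) x : ℝ) : ℂ) :=
  continuous_finsetProd _ fun j _ => Complex.continuous_ofReal.comp (continuous_Freal (hαs j))

/-- At the right endpoint `cos` vanishes; elsewhere on the domain of integration it is positive. -/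
lemma ae_mem_uIoc_imp_mem_Ioo :
    ∀ᵐ x : ℝ, x ∈ Set.uIoc (-(Real.pi / 2)) (Real.pi / 2) →
      x ∈ Set.Ioo (-(Real.pi / 2)) (Real.pi / 2) := by
  filter_upwards [Measure.ae_ne volume (Real.pi / 2)] with x hx h
  rw [Set.uIoc_of_le (by linarith [Real.pi_pos])] at h
  exact ⟨h.1, lt_of_le_of_ne h.2 hx⟩

lemma intervalIntegrable_cos_rpow {r : ℝ} (hr : -1 < r) :
    IntervalIntegrable (fun x : ℝ => Real.cos x ^ r) volume (-(Real.pi / 2)) (Real.pi / 2) := by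
  rcases le_total 0 r with h0 | h0
  · exact (Real.continuous_cos.rpow_const fun _ => Or.inr h0).intervalIntegrable _ _
  have hpi := Real.pi_pos
  have h1 : IntervalIntegrable (fun x : ℝ => (Real.pi / 2 - x) ^ r) volume
      (-(Real.pi / 2)) (Real.pi / 2) := by
    have := (intervalIntegral.intervalIntegrable_rpow' (a := Real.pi) (b := 0) hr).comp_sub_left
      (Real.pi / 2)
    convert this using 1 <;> ring_nf
  have h2 : IntervalIntegrable (fun x : ℝ => (Real.pi / 2 + x) ^ r) volume
      (-(Real.pi / 2)) (Real.pi / 2) := by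
    have := (intervalIntegral.intervalIntegrable_rpow' (a := 0) (b := Real.pi) hr).comp_add_left
      (Real.pi / 2)
    convert this using 1 <;> ring_nf
  refine ((h1.add h2).const_mul ((2 / Real.pi) ^ r)).mono_fun' ?_ ?_
  · exact (Real.measurable_cos.pow_const r).aestronglyMeasurable
  · rw [Filter.EventuallyLE, ae_restrict_iff' measurableSet_uIoc]
    filter_upwards [ae_mem_uIoc_imp_mem_Ioo] with x hx hx'
    obtain ⟨hl, hu⟩ := hx hx'
    have hc := Real.cos_pos_of_mem_Ioo ⟨hl, hu⟩
    have hp : 0 < 2 / Real.pi := by positivity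
    have hA : 0 ≤ (Real.pi / 2 - x) ^ r := Real.rpow_nonneg (by linarith) _
    have hB : 0 ≤ (Real.pi / 2 + x) ^ r := Real.rpow_nonneg (by linarith) _
    have hP : 0 ≤ (2 / Real.pi) ^ r := Real.rpow_nonneg hp.le _
    rw [Real.norm_of_nonneg (Real.rpow_nonneg hc.le _)]
    rcases le_total 0 x with hx0 | hx0
    · have h := Real.one_sub_mul_le_cos hx0 hu.le
      have e : 1 - 2 / Real.pi * x = 2 / Real.pi * (Real.pi / 2 - x) := by field_simp
      rw [e] at h
      have := Real.rpow_le_rpow_of_nonpos (mul_pos hp (sub_pos.2 hu)) h h0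
      rw [Real.mul_rpow hp.le (by linarith)] at this
      exact this.trans (mul_le_mul_of_nonneg_left (by simpa using hB) hP)
    · have h := Real.one_add_mul_le_cos hl.le hx0
      have e : 1 + 2 / Real.pi * x = 2 / Real.pi * (Real.pi / 2 + x) := by field_simp
      rw [e] at h
      have := Real.rpow_le_rpow_of_nonpos (mul_pos hp (by linarith)) h h0
      rw [Real.mul_rpow hp.le (by linarith)] at this
      exact this.trans (mul_le_mul_of_nonneg_left (by simpa using hA) hP)

lemma measurable_cos_cpow (α : ℂ) : Measurable fun x : ℝ => (Real.cos x : ℂ) ^ α :=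
  (Complex.measurable_ofReal.comp Real.measurable_cos).pow_const α

lemma intervalIntegrable_cos_cpow {α : ℂ} (hα : -1 < α.re) :
    IntervalIntegrable (fun x : ℝ => (Real.cos x : ℂ) ^ α) volume
      (-(Real.pi / 2)) (Real.pi / 2) := by
  refine (intervalIntegrable_cos_rpow hα).mono_fun' (measurable_cos_cpow α).aestronglyMeasurable ?_
  rw [Filter.EventuallyLE, ae_restrict_iff' measurableSet_uIoc]
  filter_upwards [ae_mem_uIoc_imp_mem_Ioo] with x hx hx'
  exact (Complex.norm_cpow_eq_rpow_re_of_pos (Real.cos_pos_of_mem_Ioo (hx hx')) α).le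

/-- The bound dominating the derivative `c ^ α * log c` uniformly for `re α ≥ s + ε`. -/
lemma norm_cpow_mul_log_le {c ε s : ℝ} {α : ℂ} (hc : 0 < c) (hc1 : c ≤ 1) (hε : 0 < ε)
    (hα : s + ε ≤ α.re) : ‖(c : ℂ) ^ α * Complex.log c‖ ≤ c ^ s * (1 / ε) := by
  rw [norm_mul, Complex.norm_cpow_eq_rpow_re_of_pos hc, ← Complex.ofReal_log hc.le,
    Complex.norm_real, Real.norm_eq_abs]
  have h1 : c ^ α.re ≤ c ^ s * c ^ ε := by
    rw [← Real.rpow_add hc]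
    exact Real.rpow_le_rpow_of_exponent_ge hc hc1 hα
  have h2 := Real.abs_log_mul_self_rpow_lt c ε hc hc1 hε
  rw [abs_mul, abs_of_pos (Real.rpow_pos_of_pos hc ε)] at h2
  calc c ^ α.re * |Real.log c| ≤ c ^ s * c ^ ε * |Real.log c| := by gcongr
    _ = c ^ s * (|Real.log c| * c ^ ε) := by ring
    _ ≤ c ^ s * (1 / ε) := by gcongr

/-- the integral defining `b` converges absolutely for `Re α > -1`,
and `b` is holomorphic on this half-plane. -/
theorem bFun_integrable_and_differentiableOn
    (m : ℕ) (αs : Fin m → ℝ) (hαs : ∀ j, 0 ≤ αs j) :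
    (∀ α : ℂ, -1 < α.re →
      IntervalIntegrable
        (fun x : ℝ => (Real.cos x : ℂ) ^ α * ∏ j, ((Freal (αs j) x : ℝ) : ℂ))
        volume (-(Real.pi / 2)) (Real.pi / 2)) ∧
    DifferentiableOn ℂ (bFun m αs) {α : ℂ | -1 < α.re} := by
  have hP := continuous_prod_Freal hαs
  have hint : ∀ α : ℂ, -1 < α.re →
      IntervalIntegrable
        (fun x : ℝ => (Real.cos x : ℂ) ^ α * ∏ j, ((Freal (αs j) x : ℝ) : ℂ))
        volume (-(Real.pi / 2)) (Real.pi / 2) := fun α hα =>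
    (intervalIntegrable_cos_cpow hα).mul_continuousOn hP.continuousOn
  refine ⟨hint, fun α₀ hα₀ => DifferentiableAt.differentiableWithinAt ?_⟩
  have hα₀' : -1 < α₀.re := hα₀
  obtain ⟨ε, hε⟩ : ∃ ε : ℝ, ε = (α₀.re + 1) / 3 := ⟨_, rfl⟩
  have hε0 : 0 < ε := by linarith
  refine (intervalIntegral.hasDerivAt_integral_of_dominated_loc_of_deriv_le
    (F' := fun α x => (Real.cos x : ℂ) ^ α * Complex.log (Real.cos x) *
      ∏ j, ((Freal (αs j) x : ℝ) : ℂ))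
    (bound := fun x => Real.cos x ^ (α₀.re - 2 * ε) *
      (1 / ε * ‖∏ j, ((Freal (αs j) x : ℝ) : ℂ)‖))
    (Metric.ball_mem_nhds α₀ hε0) ?_ (hint α₀ hα₀) ?_ ?_ ?_ ?_).2.differentiableAt
  · exact .of_forall fun α =>
      ((measurable_cos_cpow α).mul hP.measurable).aestronglyMeasurable
  · exact (((measurable_cos_cpow α₀).mul (Complex.measurable_log.comp
      (Complex.measurable_ofReal.comp Real.measurable_cos))).mul
        hP.measurable).aestronglyMeasurable
  · filter_upwards [ae_mem_uIoc_imp_mem_Ioo] with x hx hx' α hα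
    rw [norm_mul, ← mul_assoc]
    refine mul_le_mul_of_nonneg_right (norm_cpow_mul_log_le
      (Real.cos_pos_of_mem_Ioo (hx hx')) (Real.cos_le_one x) hε0 ?_) (norm_nonneg _)
    have h := (Complex.abs_re_le_norm (α - α₀)).trans_lt (mem_ball_iff_norm.1 hα)
    rw [Complex.sub_re, abs_lt] at h
    linarith [h.1]
  · exact (intervalIntegrable_cos_rpow (by linarith)).mul_continuousOn
      (continuous_const.mul hP.norm).continuousOn
  · filter_upwards [ae_mem_uIoc_imp_mem_Ioo] with x hx hx' α _
    have hc : (Real.cos x : ℂ) ≠ 0 :=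
      Complex.ofReal_ne_zero.2 (Real.cos_pos_of_mem_Ioo (hx hx')).ne'
    have h := ((hasDerivAt_id α).const_cpow (c := (Real.cos x : ℂ)) (Or.inl hc)).mul_const
      (∏ j, ((Freal (αs j) x : ℝ) : ℂ))
    simpa using h

end
end

section
/- For every integer d ≥ 0 and every real α > d, one has a_d(α;1) = π·Γ(α−d) / ( 2^{α−d−1}·Γ((α+1)/2)·Γ((α+1)/2 − d) ), where the right-hand side is interpreted with the reciprocal-Gamma convention: if (α+1)/2 − d is a nonpositive integer (a pole of Γ), the factor 1/Γ((α+1)/2 − d) is taken to be 0, so that the right-hand side equals 0 (this matches Lean/Mathlib's convention Γ(−n) = 0 for nonnegative integers n together with division into 0). -/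
/-!
The proof is an induction on `d` at fixed `α`.

For `d = 0` the substitution `t = sigmoid (2x) = e^x / (e^x + e^{-x})`, for which
`t (1 - t) = (2 cosh x)^{-2}`, identifies `∫ cosh^{-α}` with `2^{α-1} B(α/2, α/2)`, and Legendre's
duplication formula gives the stated form (`aOne_zero`).

For the step, put `u = 1 + i sinh x`. Then `u' = i cosh x` and `cosh² x = u (2 - u)`, so the
derivative of `cosh^{-(α-1)} u^d` is
`i ((α-1-d) cosh^{-α} u^{d+1} - (α-1-2d) cosh^{-α} u^d)`. All terms are integrable when
`α > d + 1`, so the integral of this derivative is zero, that is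
`(α-1-d) a_{d+1} = (α-1-2d) a_d` (`aOne_succ`). The right-hand side of the closed formula satisfies
the same recursion by `Γ(s+1) = s Γ(s)`.
-/

open MeasureTheory Finset

noncomputable section

/-- `a_d(α;1) = ∫_ℝ cosh^{-α}(x) (1 + i sinh x)^d dx` for real `α > d`. -/
def aOne (d : ℕ) (α : ℝ) : ℂ :=
  ∫ x : ℝ, (Real.cosh x : ℂ) ^ (-(α : ℂ)) * (1 + Complex.I * (Real.sinh x : ℂ)) ^ d

lemma sigmoid_mul_one_sub (x : ℝ) :
    Real.sigmoid (2 * x) * (1 - Real.sigmoid (2 * x)) = ((2 * Real.cosh x) ^ 2)⁻¹ := by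
  have h1 : Real.exp (-x) = (Real.exp x)⁻¹ := Real.exp_neg x
  have h2 : Real.exp (-(2 * x)) = (Real.exp x ^ 2)⁻¹ := by
    rw [Real.exp_neg, two_mul, Real.exp_add, sq]
  have h3 := Real.exp_pos x
  rw [Real.sigmoid_def, Real.cosh_eq, h1, h2]
  field_simp
  ring

lemma sigmoid_two_mul_image :
    (fun x : ℝ => Real.sigmoid (2 * x)) '' Set.univ = Set.Ioo 0 1 := by
  rw [Set.image_univ, ← Real.range_sigmoid]
  exact (mul_left_surjective₀ (two_ne_zero' ℝ)).range_comp Real.sigmoid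

lemma hasDerivAt_sigmoid_two_mul (x : ℝ) :
    HasDerivAt (fun x : ℝ => Real.sigmoid (2 * x)) (2 * ((2 * Real.cosh x) ^ 2)⁻¹) x := by
  rw [← sigmoid_mul_one_sub, mul_comm]
  have h := (hasDerivAt_id x).const_mul (2 : ℝ)
  simp only [id, mul_one] at h
  exact (Real.hasDerivAt_sigmoid (2 * x)).comp x h

lemma sigmoid_two_mul_injOn : Set.InjOn (fun x : ℝ => Real.sigmoid (2 * x)) Set.univ :=
  fun _ _ _ _ h => by simpa using h

/-- The substitution `t = sigmoid (2x)` turns the integrand of `B(α/2, α/2)`, together with the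
Jacobian, into a constant multiple of `cosh^{-α}`. -/
lemma beta_integrand_comp (α x : ℝ) :
    |2 * ((2 * Real.cosh x) ^ 2)⁻¹| • (((Real.sigmoid (2 * x) : ℝ) : ℂ) ^ ((α / 2 : ℝ) - 1 : ℂ) *
      (1 - ((Real.sigmoid (2 * x) : ℝ) : ℂ)) ^ ((α / 2 : ℝ) - 1 : ℂ)) =
    ((2 * 2 ^ (-α) : ℝ) : ℂ) * (Real.cosh x : ℂ) ^ (-(α : ℂ)) := by
  have hc := Real.cosh_pos x
  have hs := Real.sigmoid_pos (2 * x)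
  have hs' : 0 ≤ 1 - Real.sigmoid (2 * x) := sub_nonneg.2 (Real.sigmoid_le_one _)
  have key : |2 * ((2 * Real.cosh x) ^ 2)⁻¹| * (Real.sigmoid (2 * x) ^ (α / 2 - 1) *
      (1 - Real.sigmoid (2 * x)) ^ (α / 2 - 1)) = 2 * 2 ^ (-α) * Real.cosh x ^ (-α) := by
    have hq : 0 < ((2 * Real.cosh x) ^ 2)⁻¹ := by positivity
    have h1 : ((2 * Real.cosh x) ^ 2)⁻¹ * ((2 * Real.cosh x) ^ 2)⁻¹ ^ (α / 2 - 1) =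
        (2 * Real.cosh x) ^ (-α) := by
      rw [mul_comm, ← Real.rpow_add_one hq.ne', sub_add_cancel, Real.inv_rpow (by positivity),
        ← Real.rpow_natCast, ← Real.rpow_mul (by positivity), Real.rpow_neg (by positivity)]
      congr 2
      push_cast
      ring
    rw [← Real.mul_rpow hs.le hs', sigmoid_mul_one_sub, abs_of_pos (by positivity), mul_assoc, h1,
      Real.mul_rpow (by norm_num) hc.le, mul_assoc]
  rw [Complex.real_smul, ← Complex.ofReal_one, ← Complex.ofReal_sub, ← Complex.ofReal_sub,
    ← Complex.ofReal_cpow hs.le, ← Complex.ofReal_cpow hs', ← Complex.ofReal_neg,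
    ← Complex.ofReal_cpow hc.le]
  exact_mod_cast key

lemma integrable_cosh_cpow {α : ℝ} (hα : 0 < α) :
    Integrable fun x : ℝ => (Real.cosh x : ℂ) ^ (-(α : ℂ)) := by
  have ha : 0 < ((α / 2 : ℝ) : ℂ).re := by simpa using hα
  have h := Complex.betaIntegral_convergent ha ha
  rw [intervalIntegrable_iff_integrableOn_Ioo_of_le zero_le_one, ← sigmoid_two_mul_image,
    integrableOn_image_iff_integrableOn_abs_deriv_smul MeasurableSet.univ
      (fun x _ => (hasDerivAt_sigmoid_two_mul x).hasDerivWithinAt) sigmoid_two_mul_injOn,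
    integrableOn_univ] at h
  simp only [beta_integrand_comp] at h
  refine (integrable_const_mul_iff (IsUnit.mk0 _ ?_) _).1 h
  exact_mod_cast (by positivity : (2 * 2 ^ (-α) : ℝ) ≠ 0)

/-- `2^{1-α} ∫ cosh^{-α} = B(α/2, α/2)`, with the Beta function written through `Γ`. -/
lemma integral_cosh_cpow {α : ℝ} (hα : 0 < α) :
    ((2 * 2 ^ (-α) : ℝ) : ℂ) * aOne 0 α =
      ((Real.Gamma (α / 2) * Real.Gamma (α / 2) / Real.Gamma α : ℝ) : ℂ) := by
  have ha : 0 < ((α / 2 : ℝ) : ℂ).re := by simpa using hα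
  have h := Complex.betaIntegral_eq_Gamma_mul_div _ _ ha ha
  rw [Complex.betaIntegral, intervalIntegral.integral_of_le zero_le_one,
    integral_Ioc_eq_integral_Ioo, ← sigmoid_two_mul_image,
    integral_image_eq_integral_abs_deriv_smul MeasurableSet.univ
      (fun x _ => (hasDerivAt_sigmoid_two_mul x).hasDerivWithinAt) sigmoid_two_mul_injOn,
    setIntegral_univ] at h
  simp only [beta_integrand_comp, ← Complex.ofReal_add, add_halves, Complex.Gamma_ofReal] at h
  rw [integral_const_mul] at h
  simp only [aOne, pow_zero, mul_one]
  rw [h]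
  push_cast
  rfl

/-- The case `d = 0` of the closed formula: the Beta value `integral_cosh_cpow` rewritten by
Legendre's duplication formula. -/
lemma aOne_zero {α : ℝ} (hα : 0 < α) :
    aOne 0 α = ((Real.pi * Real.Gamma α /
      ((2 : ℝ) ^ (α - 1) * Real.Gamma ((α + 1) / 2) * Real.Gamma ((α + 1) / 2)) : ℝ) : ℂ) := by
  have h := integral_cosh_cpow hα
  have hne : ((2 * 2 ^ (-α) : ℝ) : ℂ) ≠ 0 := by
    exact_mod_cast (by positivity : (2 * 2 ^ (-α) : ℝ) ≠ 0)
  apply mul_left_cancel₀ hne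
  rw [h, ← Complex.ofReal_mul]
  congr 1
  have hd := Real.Gamma_mul_Gamma_add_half (α / 2)
  rw [mul_div_cancel₀ α two_ne_zero, ← add_div] at hd
  have g1 := Real.Gamma_pos_of_pos hα
  have g2 := Real.Gamma_pos_of_pos (by positivity : 0 < (α + 1) / 2)
  have hp : (2 : ℝ) ^ (1 - α) = 2 * 2 ^ (-α) := by
    rw [sub_eq_add_neg, Real.rpow_add two_pos, Real.rpow_one]
  have hp' : (2 : ℝ) ^ (α - 1) = (2 * 2 ^ (-α))⁻¹ := by
    rw [← hp, ← Real.rpow_neg two_pos.le, neg_sub]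
  have hpos : (0 : ℝ) < 2 * 2 ^ (-α) := by positivity
  rw [hp']
  rw [hp] at hd
  generalize (2 * 2 ^ (-α) : ℝ) = p at *
  have hs := Real.mul_self_sqrt Real.pi_pos.le
  -- Write `π = √π * √π`: the identity then is the square of the duplication formula `hd`.
  rw [← hs, div_eq_iff g1.ne', ← mul_div_assoc, div_mul_eq_mul_div, eq_div_iff (by positivity)]
  field_simp
  linear_combination (Real.Gamma (α / 2) * Real.Gamma ((α + 1) / 2) +
    Real.Gamma α * p * √Real.pi) * hd

lemma norm_one_add_I_mul_sinh (x : ℝ) :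
    ‖1 + Complex.I * (Real.sinh x : ℂ)‖ = Real.cosh x := by
  rw [mul_comm, ← Complex.ofReal_one, Complex.norm_add_mul_I, one_pow, add_comm,
    ← Real.cosh_sq, Real.sqrt_sq (Real.cosh_pos x).le]

/-- The integrand of `a_d(α;1)` has norm `cosh^{-(α-d)}`, because `|1 + i sinh x| = cosh x`. -/
lemma integrable_aOne (d : ℕ) {α : ℝ} (hα : (d : ℝ) < α) :
    Integrable fun x : ℝ =>
      (Real.cosh x : ℂ) ^ (-(α : ℂ)) * (1 + Complex.I * (Real.sinh x : ℂ)) ^ d := by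
  refine (integrable_cosh_cpow (sub_pos.2 hα)).mono (Continuous.aestronglyMeasurable ?_)
    (.of_forall fun x => ?_)
  · refine Continuous.mul (Continuous.cpow ?_ continuous_const fun x => ?_) ?_
    · exact Complex.continuous_ofReal.comp Real.continuous_cosh
    · exact Complex.ofReal_mem_slitPlane.2 (Real.cosh_pos x)
    · have := Complex.continuous_ofReal.comp Real.continuous_sinh
      exact (continuous_const.add (continuous_const.mul this)).pow d
  · have hc := Real.cosh_pos x
    rw [norm_mul, norm_pow, norm_one_add_I_mul_sinh, ← Complex.ofReal_neg, ← Complex.ofReal_neg,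
      Complex.norm_cpow_eq_rpow_re_of_pos hc, Complex.norm_cpow_eq_rpow_re_of_pos hc,
      Complex.ofReal_re, Complex.ofReal_re, ← Real.rpow_natCast, ← Real.rpow_add hc]
    apply le_of_eq
    congr 1
    ring

/-- The derivative behind the recursion in `d`. It uses `d/dx (1 + i sinh x) = i cosh x` and
`cosh² x = (1 + i sinh x)(1 - i sinh x)` to express everything through powers of
`1 + i sinh x`. -/
lemma hasDerivAt_aOne_primitive (d : ℕ) (α x : ℝ) :
    HasDerivAt (fun x : ℝ => (Real.cosh x : ℂ) ^ (-((α - 1 : ℝ) : ℂ)) *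
        (1 + Complex.I * (Real.sinh x : ℂ)) ^ d)
      (Complex.I * ((α - 1 - d) * ((Real.cosh x : ℂ) ^ (-(α : ℂ)) *
          (1 + Complex.I * (Real.sinh x : ℂ)) ^ (d + 1)) -
        (α - 1 - 2 * d) * ((Real.cosh x : ℂ) ^ (-(α : ℂ)) *
          (1 + Complex.I * (Real.sinh x : ℂ)) ^ d))) x := by
  have hc := Real.cosh_pos x
  have hc' : (Real.cosh x : ℂ) ≠ 0 := Complex.ofReal_ne_zero.2 hc.ne'
  have h0 : HasDerivAt (fun x : ℝ => (Real.cosh x : ℂ)) (Real.sinh x : ℂ) x :=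
    (Real.hasDerivAt_cosh x).ofReal_comp
  have h1 : HasDerivAt (fun x : ℝ => (Real.cosh x : ℂ) ^ (-((α - 1 : ℝ) : ℂ)))
      (-((α - 1 : ℝ) : ℂ) * (Real.cosh x : ℂ) ^ (-((α - 1 : ℝ) : ℂ) - 1) * Real.sinh x) x :=
    HasDerivAt.comp (h₂ := fun z : ℂ => z ^ (-((α - 1 : ℝ) : ℂ))) x
      (Complex.hasStrictDerivAt_cpow_const (Complex.ofReal_mem_slitPlane.2 hc)).hasDerivAt h0
  have h2 := ((((Real.hasDerivAt_sinh x).ofReal_comp).const_mul Complex.I).const_add 1).fun_pow d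
  convert! h1.mul h2 using 1
  have e1 : (Real.cosh x : ℂ) ^ (-((α - 1 : ℝ) : ℂ) - 1) = (Real.cosh x : ℂ) ^ (-(α : ℂ)) := by
    congr 1; push_cast; ring
  have e2 : (Real.cosh x : ℂ) ^ (-((α - 1 : ℝ) : ℂ)) =
      (Real.cosh x : ℂ) ^ (-(α : ℂ)) * Real.cosh x := by
    rw [show -((α - 1 : ℝ) : ℂ) = -(α : ℂ) + 1 by push_cast; ring, Complex.cpow_add _ _ hc',
      Complex.cpow_one]
  rw [e1, e2]
  have hsq : (Real.cosh x : ℂ) ^ 2 = (Real.sinh x : ℂ) ^ 2 + 1 := by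
    exact_mod_cast Real.cosh_sq x
  generalize (Real.cosh x : ℂ) ^ (-(α : ℂ)) = w
  generalize (Real.cosh x : ℂ) = c at *
  generalize (Real.sinh x : ℂ) = s at *
  have hI := Complex.I_sq
  have hu : c ^ 2 = (1 + Complex.I * s) * (1 - Complex.I * s) := by
    linear_combination hsq + s ^ 2 * hI
  rcases d with _ | d
  · simp
    linear_combination w * s * (α - 1) * hI
  · simp only [Nat.add_sub_cancel]
    push_cast
    rw [pow_succ (_ + _) (d + 1), pow_succ (_ + _) d]
    generalize (1 + Complex.I * s) ^ d = v
    linear_combination w * s * (α - 1) * v * (1 + Complex.I * s) * hI -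
      w * v * (d + 1) * Complex.I * hu

/-- Recursion in `d` at fixed `α`, from the vanishing of the integral of an exact derivative. -/
lemma aOne_succ (d : ℕ) {α : ℝ} (hα : (d : ℝ) + 1 < α) :
    ((α : ℂ) - 1 - d) * aOne (d + 1) α = ((α : ℂ) - 1 - 2 * d) * aOne d α := by
  have i1 := integrable_aOne (d + 1) (α := α) (by push_cast; exact hα)
  have i0 := integrable_aOne d (α := α) (by linarith)
  have ip := integrable_aOne d (α := α - 1) (by linarith)
  have h := integral_eq_zero_of_hasDerivAt_of_integrable (hasDerivAt_aOne_primitive d α)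
    (((i1.const_mul _).sub (i0.const_mul _)).const_mul _) ip
  rw [integral_const_mul, integral_sub (i1.const_mul _) (i0.const_mul _), integral_const_mul,
    integral_const_mul] at h
  exact sub_eq_zero.1 ((mul_eq_zero.1 h).resolve_left Complex.I_ne_zero)

/-- closed formula `a_d(α;1) = π Γ(α-d) / (2^{α-d-1} Γ((α+1)/2) Γ((α+1)/2-d))`,
with the reciprocal-Gamma convention (`Γ` vanishes at its poles in Mathlib, so a pole of
`Γ((α+1)/2-d)` makes the right-hand side `0`). -/
theorem aOne_eq_gamma_formula (d : ℕ) (α : ℝ) (hα : (d : ℝ) < α) :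
    aOne d α
      = ((Real.pi * Real.Gamma (α - d) /
          ((2 : ℝ) ^ (α - (d : ℝ) - 1) * Real.Gamma ((α + 1) / 2) *
            Real.Gamma ((α + 1) / 2 - d)) : ℝ) : ℂ) := by
  induction d with
  | zero => simpa using aOne_zero (by simpa using hα)
  | succ d ih =>
    push_cast at hα
    have h := aOne_succ d hα
    rw [ih (by linarith)] at h
    have hne : α - 1 - d ≠ 0 := by linarith
    have hne' : (α : ℂ) - 1 - d ≠ 0 := by exact_mod_cast hne
    apply mul_left_cancel₀ hne'
    rw [h]
    have g : Real.Gamma (α - d) = (α - 1 - d) * Real.Gamma (α - 1 - d) := by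
      rw [← Real.Gamma_add_one hne]
      congr 1
      ring
    have p : (2 : ℝ) ^ (α - d - 1) = 2 * 2 ^ (α - (d + 1) - 1) := by
      rw [mul_comm, ← Real.rpow_add_one two_ne_zero]
      congr 1
      ring
    have e : α - (d + 1) = α - 1 - d := by ring
    obtain ⟨s, hs⟩ : ∃ s, s = (α + 1) / 2 - (d + 1) := ⟨_, rfl⟩
    have es : (α + 1) / 2 - d = s + 1 := by rw [hs]; ring
    have e2 : α - 1 - 2 * d = 2 * s := by rw [hs]; ring
    have hq : (0 : ℝ) < 2 ^ (α - 1 - d - 1) := by positivity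
    have hG : Real.Gamma ((α + 1) / 2) ≠ 0 :=
      ne_of_gt (Real.Gamma_pos_of_pos (by have := d.cast_nonneg (α := ℝ); linarith))
    -- The factor `α - 1 - 2d` vanishes exactly when `s = 0`; then `Γ(s) = Γ(0) = 0` in Mathlib, so
    -- both sides are `0`. At the other poles `Γ(s) = 0` gives `Γ(s + 1) = 0` as well.
    have key : (α - 1 - 2 * d) * (Real.pi * Real.Gamma (α - d) /
          ((2 : ℝ) ^ (α - (d : ℝ) - 1) * Real.Gamma ((α + 1) / 2) *
            Real.Gamma ((α + 1) / 2 - d))) =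
        (α - 1 - d) * (Real.pi * Real.Gamma (α - (d + 1)) /
          ((2 : ℝ) ^ (α - ((d : ℝ) + 1) - 1) * Real.Gamma ((α + 1) / 2) *
            Real.Gamma ((α + 1) / 2 - (d + 1)))) := by
      rw [g, p, e, ← hs, es, e2]
      rcases eq_or_ne s 0 with h0 | h0
      · simp [h0]
      · rw [Real.Gamma_add_one h0]
        rcases eq_or_ne (Real.Gamma s) 0 with h1 | h1
        · simp [h1]
        · field_simp
    exact_mod_cast key

end
end

section
/- For every integer n ≥ 2, the following identity of rational numbers holds: Σ_{ℓ=2}^{⌊n/2⌋} (−1)^ℓ · binom(n, 2ℓ) · (ℓ−1)!·(n−ℓ−1)! / (n−1)! = n/2 − Σ_{j=1}^{n−1} 1/j. -/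
open Finset

/-!
The summand with `l = 1` equals `-n / 2`, so the claim says that the sum over all `l ≥ 1` of
`altTerm n l` is `-(1 + 1/2 + ⋯ + 1/(n-1))`. This follows by induction on `n` from the
Wilf–Zeilberger identity `altTerm_succ_sub`: the difference `altTerm (n + 1) l - altTerm n l`
telescopes in `l`, with antidifference `altCert n l` found by Gosper's algorithm. The certificate
vanishes for `2 * l > n + 1` and equals `1 / n` at `l = 1`, so the sum changes by `-1 / n`.
-/

/-- The summand of the identity. The truncated subtractions matter only for `l = 0`, which is never
used, and for `l ≥ n`, where the binomial coefficient vanishes unless `l = n = 0`. -/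
def altTerm (n l : ℕ) : ℚ :=
  (-1 : ℚ) ^ l * (n.choose (2 * l) : ℚ) *
    ((l - 1).factorial : ℚ) * ((n - l - 1).factorial : ℚ) / ((n - 1).factorial : ℚ)

/-- The Gosper antidifference in `l` of `altTerm (n + 1) l - altTerm n l`. -/
def altCert (n l : ℕ) : ℚ :=
  (-1 : ℚ) ^ (l + 1) * 2 * (2 * l - 1) * ((n + 1).choose (2 * l) : ℚ) *
    (l.factorial : ℚ) * ((n - l).factorial : ℚ) / (n * ((n + 1).factorial : ℚ))

/-- Stated in `ℚ` so that it holds without any bound on `k`. -/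
lemma cast_choose_succ_right (n k : ℕ) :
    (n.choose (k + 1) : ℚ) * (k + 1) = n.choose k * (n - k) := by
  rcases le_or_gt k n with h | h
  · have := Nat.choose_succ_right_eq n k
    rw [← Nat.cast_sub h]
    exact_mod_cast this
  · simp [Nat.choose_eq_zero_of_lt h, Nat.choose_eq_zero_of_lt (h.trans (Nat.lt_succ_self k))]

/-- Stated in `ℚ` so that it holds without any bound on `k`. -/
lemma cast_choose_succ_left (n k : ℕ) :
    (n.choose k : ℚ) * (n + 1) = (n + 1).choose k * (n + 1 - k) := by
  rcases le_or_gt k (n + 1) with h | h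
  · have := Nat.choose_mul_succ_eq n k
    have h2 : ((n + 1 - k : ℕ) : ℚ) = n + 1 - k := by rw [Nat.cast_sub h]; push_cast; ring
    rw [← h2]
    exact_mod_cast this
  · simp [Nat.choose_eq_zero_of_lt h, Nat.choose_eq_zero_of_lt ((Nat.lt_succ_self n).trans h)]

lemma altTerm_succ_sub {n l : ℕ} (hl : 1 ≤ l) (hln : l < n) :
    altTerm (n + 1) l - altTerm n l = altCert n (l + 1) - altCert n l := by
  obtain ⟨k, rfl⟩ := Nat.exists_eq_add_of_le' hl
  obtain ⟨m, rfl⟩ := Nat.exists_eq_add_of_lt hln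
  -- All binomial coefficients are expressed through `binom(n + 1, 2l)`, where `l = k + 1`.
  have h1 := cast_choose_succ_left (k + 1 + m + 1) (2 * (k + 1))
  have h2 := cast_choose_succ_right (k + 1 + m + 1 + 1) (2 * (k + 1))
  have h3 := cast_choose_succ_right (k + 1 + m + 1 + 1) (2 * (k + 1) + 1)
  unfold altTerm altCert
  rw [show 2 * (k + 1 + 1) = 2 * (k + 1) + 1 + 1 by ring,
    show k + 1 + m + 1 + 1 - (k + 1) - 1 = m + 1 by omega,
    show k + 1 + m + 1 - (k + 1) - 1 = m by omega,
    show k + 1 + m + 1 - (k + 1) = m + 1 by omega,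
    show k + 1 + m + 1 - (k + 1 + 1) = m by omega,
    show k + 1 + m + 1 + 1 - 1 = k + 1 + m + 1 by omega,
    show k + 1 + m + 1 - 1 = k + 1 + m by omega,
    show k + 1 - 1 = k by omega]
  simp only [Nat.factorial_succ (k + 1 + m + 1), Nat.factorial_succ (k + 1 + m),
    Nat.factorial_succ m, Nat.factorial_succ (k + 1), Nat.factorial_succ k]
  generalize ((k + 1 + m + 1 + 1).choose (2 * (k + 1)) : ℚ) = A at *
  generalize ((k + 1 + m + 1).choose (2 * (k + 1)) : ℚ) = B at *
  generalize ((k + 1 + m + 1 + 1).choose (2 * (k + 1) + 1) : ℚ) = C at *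
  generalize ((k + 1 + m + 1 + 1).choose (2 * (k + 1) + 1 + 1) : ℚ) = D at *
  have hF : ((k + 1 + m).factorial : ℚ) ≠ 0 := by positivity
  push_cast at *
  generalize ((k + 1 + m).factorial : ℚ) = F at *
  have e1 : B = A * (k + 1 + m + 1 + 1 - 2 * (k + 1)) / (k + 1 + m + 1 + 1) := by
    rw [eq_div_iff (by positivity), h1]
  have e2 : C = A * (k + 1 + m + 1 + 1 - 2 * (k + 1)) / (2 * (k + 1) + 1) := by
    rw [eq_div_iff (by positivity), h2]
  have e3 : D = C * (k + 1 + m + 1 + 1 - (2 * (k + 1) + 1)) / (2 * (k + 1) + 1 + 1) := by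
    rw [eq_div_iff (by positivity), h3]
  rw [e3, e2, e1]
  field_simp
  ring

lemma altTerm_eq_zero {n l : ℕ} (h : n < 2 * l) : altTerm n l = 0 := by
  simp [altTerm, Nat.choose_eq_zero_of_lt h]

lemma altCert_eq_zero {n l : ℕ} (h : n + 1 < 2 * l) : altCert n l = 0 := by
  simp [altCert, Nat.choose_eq_zero_of_lt h]

lemma altTerm_one {n : ℕ} (hn : 2 ≤ n) : altTerm n 1 = -(n / 2) := by
  obtain ⟨m, rfl⟩ := Nat.exists_eq_add_of_le' hn
  simp only [altTerm, mul_one, Nat.cast_choose_two,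
    show m + 2 - 1 = m + 1 by omega, Nat.factorial_succ]
  have : (m.factorial : ℚ) ≠ 0 := by positivity
  push_cast
  simp
  field_simp
  ring

lemma altCert_one {n : ℕ} (hn : 1 ≤ n) : altCert n 1 = 1 / n := by
  obtain ⟨m, rfl⟩ := Nat.exists_eq_add_of_le' hn
  simp only [altCert, mul_one, Nat.cast_choose_two,
    show m + 1 - 1 = m by omega, Nat.factorial_succ]
  have : (m.factorial : ℚ) ≠ 0 := by positivity
  push_cast
  simp
  field_simp
  ring

lemma sum_altTerm {n : ℕ} (hn : 2 ≤ n) :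
    ∑ l ∈ Finset.Ico 1 n, altTerm n l = -∑ j ∈ Finset.Ico 1 n, (1 : ℚ) / j := by
  induction n, hn using Nat.le_induction with
  | base => simp [altTerm_one]
  | succ n hn ih =>
    rw [Finset.sum_Ico_succ_top (by omega), Finset.sum_Ico_succ_top (by omega),
      altTerm_eq_zero (by omega), add_zero]
    have h : ∑ l ∈ Finset.Ico 1 n, (altTerm (n + 1) l - altTerm n l) = altCert n n - altCert n 1 := by
      rw [← Finset.sum_Ico_sub (altCert n) (by omega)]
      refine Finset.sum_congr rfl fun l hl => ?_
      rw [Finset.mem_Ico] at hl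
      exact altTerm_succ_sub hl.1 hl.2
    rw [Finset.sum_sub_distrib, ih, altCert_eq_zero (by omega), altCert_one (by omega)] at h
    linarith

/-- the combinatorial identity
`Σ_{ℓ=2}^{⌊n/2⌋} (−1)^ℓ binom(n,2ℓ) (ℓ−1)!(n−ℓ−1)!/(n−1)! = n/2 − Σ_{j=1}^{n−1} 1/j`. -/
theorem alternating_sum_harmonic (n : ℕ) (hn : 2 ≤ n) :
    (∑ l ∈ Finset.Icc 2 (n / 2),
        (-1 : ℚ) ^ l * (n.choose (2 * l) : ℚ) *
          ((l - 1).factorial : ℚ) * ((n - l - 1).factorial : ℚ) / ((n - 1).factorial : ℚ))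
      = (n : ℚ) / 2 - ∑ j ∈ Finset.Icc 1 (n - 1), (1 : ℚ) / j := by
  change ∑ l ∈ Finset.Icc 2 (n / 2), altTerm n l = _
  have hsub : ∑ l ∈ Finset.Icc 2 (n / 2), altTerm n l = ∑ l ∈ Finset.Ico 2 n, altTerm n l := by
    refine Finset.sum_subset (fun l hl => ?_) fun l hl hl' => altTerm_eq_zero ?_
    · simp only [Finset.mem_Icc, Finset.mem_Ico] at *
      omega
    · simp only [Finset.mem_Icc, Finset.mem_Ico] at *
      omega
  have hIcc : Finset.Icc 1 (n - 1) = Finset.Ico 1 n := by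
    ext j
    simp only [Finset.mem_Icc, Finset.mem_Ico]
    omega
  have h := sum_altTerm hn
  rw [Finset.sum_eq_sum_Ico_succ_bot (by omega), altTerm_one hn] at h
  rw [hsub, hIcc]
  linarith
end
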